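/- arXiv:2211.00370 — 2 statements merged into one kernel-verified Lean document; each statement's English description precedes it below -/
import Mathlib

section
/- For every z ∈ ℝⁿ and λ > 0, the standard bubble δ(z,λ)(x) = 2^{(n-2σ)/2} (Γ((n+2σ)/2)/Γ((n-2σ)/2))^{(n-2σ)/(4σ)} (λ/(λ² + |x-z|²))^{(n-2σ)/2} is a positive solution of the fractional equation (−Δ)^σ u = u^{(n+2σ)/(n−2σ)} on ℝⁿ. -/
open MeasureTheory Real Filter

noncomputable section

abbrev Ex (n : ℕ) := EuclideanSpace ℝ (Fin n)
abbrev Fx (n : ℕ) := Ex n × ℝ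

/-- Euclidean length of a point of the (closed) upper half space `ℝⁿ × ℝ`. -/
def pnorm {n : ℕ} (p : Fx n) : ℝ := Real.sqrt (‖p.1‖ ^ 2 + p.2 ^ 2)

/-- Squared Euclidean length of the full gradient `|∇U|²` of `U : ℝ^{n+1} → ℝ`. -/
def gradSq {n : ℕ} (U : Fx n → ℝ) (p : Fx n) : ℝ :=
  (∑ i : Fin n, (fderiv ℝ U p (EuclideanSpace.single i 1, (0:ℝ))) ^ 2)
    + (fderiv ℝ U p ((0 : Ex n), (1:ℝ))) ^ 2

/-- Inner product `∇U · ∇V` of the full gradients. -/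
def gradInner {n : ℕ} (U V : Fx n → ℝ) (p : Fx n) : ℝ :=
  (∑ i : Fin n, (fderiv ℝ U p (EuclideanSpace.single i 1, (0:ℝ)))
      * (fderiv ℝ V p (EuclideanSpace.single i 1, (0:ℝ))))
    + (fderiv ℝ U p ((0 : Ex n), (1:ℝ))) * (fderiv ℝ V p ((0 : Ex n), (1:ℝ)))

/-- The open upper half space `ℝ^{n+1}_+`. -/
def halfSpace (n : ℕ) : Set (Fx n) := {p | 0 < p.2}

/-- The weighted Dirichlet energy `∫_{ℝ^{n+1}_+} t^{1-2σ} |∇U|²`. -/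
def energy (n : ℕ) (σ : ℝ) (U : Fx n → ℝ) : ℝ :=
  ∫ p in halfSpace n, p.2 ^ (1 - 2*σ) * gradSq U p

/-- `N_σ = 2^{1-2σ} Γ(1-σ)/Γ(σ)`. -/
def Nconst (σ : ℝ) : ℝ := (2:ℝ) ^ (1 - 2*σ) * Real.Gamma (1 - σ) / Real.Gamma σ

/-- The critical exponent `2*_σ = 2n/(n-2σ)`. -/
def qc (n : ℕ) (σ : ℝ) : ℝ := 2 * n / (n - 2*σ)

/-- `H(x) = (2/(1+|x|²))^{(n-2σ)/2}`. -/
def Hfun (n : ℕ) (σ : ℝ) (x : Ex n) : ℝ := (2 / (1 + ‖x‖^2)) ^ (((n:ℝ) - 2*σ)/2)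

/-- The energy functional `I_K`. -/
def IK (n : ℕ) (σ : ℝ) (K : Ex n → ℝ) (U : Fx n → ℝ) : ℝ :=
  (1/2) * energy n σ U - (Nconst σ / qc n σ) * ∫ x : Ex n, K x * |U (x, 0)| ^ qc n σ

/-- The subcritical energy functional `I_{K,τ}`. -/
def IKt (n : ℕ) (σ τ : ℝ) (K : Ex n → ℝ) (U : Fx n → ℝ) : ℝ :=
  (1/2) * energy n σ U
    - (Nconst σ / (qc n σ - τ)) * ∫ x : Ex n, K x * Hfun n σ x ^ τ * |U (x, 0)| ^ (qc n σ - τ)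

/-- The standard bubble `δ(z,λ)`. -/
def bubble (n : ℕ) (σ : ℝ) (z : Ex n) (lam : ℝ) (x : Ex n) : ℝ :=
  (2:ℝ) ^ (((n:ℝ) - 2*σ)/2)
    * (Real.Gamma (((n:ℝ) + 2*σ)/2) / Real.Gamma (((n:ℝ) - 2*σ)/2)) ^ (((n:ℝ) - 2*σ)/(4*σ))
    * (lam / (lam^2 + ‖x - z‖^2)) ^ (((n:ℝ) - 2*σ)/2)

/-- Fractional Laplacian via the principal-value singular integral. -/
def fracLap (n : ℕ) (σ : ℝ) (u : Ex n → ℝ) (x : Ex n) : ℝ :=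
  ((2:ℝ) ^ (2*σ) * σ * Real.Gamma (((n:ℝ) + 2*σ)/2)
      / (Real.pi ^ ((n:ℝ)/2) * Real.Gamma (1 - σ))) *
    limUnder (nhdsWithin (0:ℝ) (Set.Ioi 0))
      (fun ε => ∫ y in {y : Ex n | ε < dist x y}, (u x - u y) / dist x y ^ ((n:ℝ) + 2*σ))

/-- Pointwise divergence-form operator `div(t^{1-2σ} ∇U)`. -/
def divForm (n : ℕ) (σ : ℝ) (U : Fx n → ℝ) (p : Fx n) : ℝ :=
  (∑ i : Fin n, fderiv ℝ
      (fun q : Fx n => q.2 ^ (1 - 2*σ) * fderiv ℝ U q (EuclideanSpace.single i 1, (0:ℝ)))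
      p (EuclideanSpace.single i 1, (0:ℝ)))
    + fderiv ℝ (fun q : Fx n => q.2 ^ (1 - 2*σ) * fderiv ℝ U q ((0:Ex n), (1:ℝ)))
        p ((0:Ex n), (1:ℝ))

/-- The weighted Neumann derivative `∂_ν^σ U = -N_σ⁻¹ lim_{t→0⁺} t^{1-2σ} ∂_t U`. -/
def pnuD (n : ℕ) (σ : ℝ) (U : Fx n → ℝ) (x : Ex n) : ℝ :=
  -(Nconst σ)⁻¹ * limUnder (nhdsWithin (0:ℝ) (Set.Ioi 0))
      (fun t => t ^ (1 - 2*σ) * fderiv ℝ U (x, t) ((0:Ex n), (1:ℝ)))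

/-- The canonical σ-harmonic extension with normalizing constant `β`. -/
def Pext (n : ℕ) (σ β : ℝ) (u : Ex n → ℝ) (p : Fx n) : ℝ :=
  if p.2 = 0 then u p.1
  else β * ∫ ξ : Ex n, p.2 ^ (2*σ) / (‖p.1 - ξ‖^2 + p.2^2) ^ (((n:ℝ) + 2*σ)/2) * u ξ

/-- Smooth compactly supported functions: a dense subclass of `D`. -/
def smoothCpt (n : ℕ) (U : Fx n → ℝ) : Prop := ContDiff ℝ (⊤ : ℕ∞) U ∧ HasCompactSupport U

/-- `L^{2*_σ}` norm of the trace. -/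
def traceNorm (n : ℕ) (σ : ℝ) (U : Fx n → ℝ) : ℝ :=
  (∫ x : Ex n, |U (x, 0)| ^ qc n σ) ^ (qc n σ)⁻¹

/-- The sharp trace constant `𝒮_{n,σ}`. -/
def sharpTrace (n : ℕ) (σ : ℝ) : ℝ :=
  sSup {c : ℝ | 0 ≤ c ∧ ∀ U : Fx n → ℝ, smoothCpt n U →
    c * traceNorm n σ U ≤ Real.sqrt (energy n σ U)}

/-- The sharp fractional Sobolev constant `S_{n,σ} = N_σ^{1/2} 𝒮_{n,σ}`. -/
def Sc (n : ℕ) (σ : ℝ) : ℝ := Real.sqrt (Nconst σ) * sharpTrace n σ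



lemma aux_gamma_integrable {s c : ℝ} (hs : 0 < s) (hc : 0 < c) :
    IntegrableOn (fun t : ℝ => t ^ (s - 1) * exp (-(c * t))) (Set.Ioi 0) := by
  have := integrableOn_rpow_mul_exp_neg_mul_rpow (p := 1) (s := s - 1) (b := c) (by linarith)
    one_pos hc
  simpa using this

lemma aux_J {σ c : ℝ} (h0 : 0 < σ) (h1 : σ < 1) (hc : 0 < c) :
    IntegrableOn (fun t : ℝ => t ^ (-σ - 1) * (1 - exp (-(c * t)))) (Set.Ioi 0) ∧
    ∫ t in Set.Ioi (0:ℝ), t ^ (-σ - 1) * (1 - exp (-(c * t))) = c ^ σ * Real.Gamma (1 - σ) / σ := by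
  have hinner : ∀ t ∈ Set.Ioc 0 c, ∫ τ in Set.Ioi (0:ℝ), τ ^ (-σ) * exp (-(t * τ))
      = t ^ (σ - 1) * Real.Gamma (1 - σ) := by
    intro t ht
    have := Real.integral_rpow_mul_exp_neg_mul_Ioi (a := 1 - σ) (r := t) (by linarith) ht.1
    rw [show 1 - σ - 1 = -σ by ring] at this
    rw [this, one_div, inv_rpow ht.1.le, ← rpow_neg ht.1.le, neg_sub]
  have hpow : IntervalIntegrable (fun t : ℝ => t ^ (σ - 1) * Real.Gamma (1 - σ)) volume 0 c :=
    (intervalIntegral.intervalIntegrable_rpow' (by linarith)).mul_const _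
  have hint : Integrable (Function.uncurry fun t τ : ℝ => τ ^ (-σ) * exp (-(t * τ)))
      ((volume.restrict (Set.Ioc 0 c)).prod (volume.restrict (Set.Ioi 0))) := by
    rw [integrable_prod_iff]
    · constructor
      · filter_upwards [ae_restrict_mem measurableSet_Ioc] with t ht
        have := aux_gamma_integrable (s := 1 - σ) (c := t) (by linarith) ht.1
        rw [show 1 - σ - 1 = -σ by ring] at this
        exact this
      · refine Integrable.congr ((intervalIntegrable_iff_integrableOn_Ioc_of_le hc.le).1 hpow) ?_
        filter_upwards [ae_restrict_mem measurableSet_Ioc] with t ht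
        rw [← hinner t ht]
        refine setIntegral_congr_fun measurableSet_Ioi fun τ hτ => ?_
        have hτ' : (0:ℝ) < τ := hτ
        simp only [Function.uncurry]
        rw [Real.norm_of_nonneg (by positivity)]
    · apply Measurable.aestronglyMeasurable
      unfold Function.uncurry
      fun_prop
  have houter : ∀ τ ∈ Set.Ioi (0:ℝ), ∫ t in Set.Ioc 0 c, τ ^ (-σ) * exp (-(t * τ))
      = τ ^ (-σ - 1) * (1 - exp (-(c * τ))) := by
    intro τ hτ
    have hτ' : (0:ℝ) < τ := hτ
    rw [← intervalIntegral.integral_of_le hc.le]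
    have hd : ∀ t ∈ Set.uIcc 0 c, HasDerivAt (fun t => -(τ ^ (-σ - 1) * exp (-(t * τ))))
        (τ ^ (-σ) * exp (-(t * τ))) t := by
      intro t _
      have h := ((((hasDerivAt_id t).mul_const τ).neg.exp).const_mul (τ ^ (-σ - 1))).neg
      convert! h using 1
      simp only [id, one_mul, Pi.neg_apply]
      rw [show -σ = -σ - 1 + 1 by ring, rpow_add hτ', rpow_one]
      ring_nf
    rw [intervalIntegral.integral_eq_sub_of_hasDerivAt hd
      (Continuous.intervalIntegrable (by fun_prop) _ _)]
    simp
    ring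
  constructor
  · refine Integrable.congr hint.integral_prod_right ?_
    filter_upwards [ae_restrict_mem measurableSet_Ioi] with τ hτ
    exact houter τ hτ
  · rw [← setIntegral_congr_fun measurableSet_Ioi houter, ← integral_integral_swap hint,
      setIntegral_congr_fun measurableSet_Ioc hinner, ← intervalIntegral.integral_of_le hc.le,
      intervalIntegral.integral_mul_const, integral_rpow (by left; linarith)]
    simp [h0.ne']
    ring

lemma aux_gauss {n : ℕ} {τ : ℝ} (hτ : 0 < τ) (b : Ex n) :
    Integrable (fun w : Ex n => exp (-(τ * ‖w + b‖ ^ 2))) ∧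
    ∫ w : Ex n, exp (-(τ * ‖w + b‖ ^ 2)) = (π / τ) ^ ((n:ℝ) / 2) := by
  have h := GaussianFourier.integral_rexp_neg_mul_sq_norm (V := Ex n) hτ
  simp only [neg_mul, finrank_euclideanSpace, Fintype.card_fin] at h
  have hi : Integrable (fun w : Ex n => exp (-(τ * ‖w‖ ^ 2))) :=
    .of_integral_ne_zero (by rw [h]; positivity)
  exact ⟨hi.comp_add_right b, by rw [← h]; exact integral_add_right_eq_self (fun w : Ex n => exp (-(τ * ‖w‖ ^ 2))) b⟩

/-- the symmetrised integrand after inversion -/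
def auxF {n : ℕ} (s a : ℝ) (b w : Ex n) : ℝ :=
  (‖w‖ ^ 2) ^ (-s) - ((‖w + b‖ ^ 2 + a) ^ (-s) + (‖w - b‖ ^ 2 + a) ^ (-s)) / 2

lemma aux_gamma {s c : ℝ} (hs : 0 < s) (hc : 0 < c) :
    ∫ t in Set.Ioi (0:ℝ), t ^ (s - 1) * exp (-(c * t)) = c ^ (-s) * Real.Gamma s := by
  rw [Real.integral_rpow_mul_exp_neg_mul_Ioi hs hc, one_div, inv_rpow hc.le, rpow_neg hc.le]

lemma auxF_main {n : ℕ} {σ a s : ℝ} (h0 : 0 < σ) (h1 : σ < 1) (ha : 0 < a)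
    (hs : 0 < s) (hsn : s = (n:ℝ) / 2 - σ) (hn : 2 ≤ n) (b : Ex n) :
    Integrable (auxF s a b) ∧
    ∫ w, auxF s a b w = π ^ ((n:ℝ)/2) / Real.Gamma s * (a ^ σ * Real.Gamma (1 - σ) / σ) := by
  set B : ℝ := ‖b‖ ^ 2 with hB
  have hB0 : 0 ≤ B := by positivity
  have hΓ : 0 < Real.Gamma s := Real.Gamma_pos_of_pos hs
  let P : ℝ → Ex n → ℝ := fun τ w => τ ^ (s - 1) * (exp (-(τ * ‖w‖ ^ 2)) * (1 - exp (-((a + B) * τ))))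
  let Q : ℝ → Ex n → ℝ := fun τ w => τ ^ (s - 1) * (exp (-(a * τ)) *
    ((exp (-(τ * ‖w + b‖ ^ 2)) + exp (-(τ * ‖w - b‖ ^ 2))) / 2
      - exp (-(τ * ‖w‖ ^ 2)) * exp (-(B * τ))))
  have hexp : ∀ {x : ℝ}, 0 ≤ x → 0 ≤ 1 - exp (-x) := by
    intro x hx
    have : exp (-x) ≤ 1 := exp_le_one_iff.2 (by linarith)
    linarith
  have hP0 : ∀ τ ∈ Set.Ioi (0:ℝ), ∀ w, 0 ≤ P τ w := by
    intro τ hτ w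
    have hτ' : (0:ℝ) < τ := hτ
    have := hexp (x := (a + B) * τ) (by positivity)
    simp only [P]
    positivity
  have hQ0 : ∀ τ ∈ Set.Ioi (0:ℝ), ∀ w, 0 ≤ Q τ w := by
    intro τ hτ w
    have hτ' : (0:ℝ) < τ := hτ
    have : 0 ≤ (exp (-(τ * ‖w + b‖ ^ 2)) + exp (-(τ * ‖w - b‖ ^ 2))) / 2
      - exp (-(τ * ‖w‖ ^ 2)) * exp (-(B * τ)) := by
      have hpar := parallelogram_law_with_norm ℝ w b
      have e1 : exp (-(τ * ‖w‖ ^ 2)) * exp (-(B * τ))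
          = exp (-(τ * ‖w + b‖ ^ 2) / 2) * exp (-(τ * ‖w - b‖ ^ 2) / 2) := by
        rw [← exp_add, ← exp_add]
        congr 1
        have : ‖w‖ ^ 2 + B = (‖w + b‖ ^ 2 + ‖w - b‖ ^ 2) / 2 := by rw [hB]; nlinarith
        linear_combination (-τ) * this
      have e2 : ∀ x : ℝ, exp (-x) = exp (-x / 2) ^ 2 := by
        intro x; rw [← exp_nat_mul]; congr 1; push_cast; ring
      rw [e1, e2 (τ * ‖w + b‖ ^ 2), e2 (τ * ‖w - b‖ ^ 2)]
      nlinarith [sq_nonneg (exp (-(τ * ‖w + b‖ ^ 2) / 2) - exp (-(τ * ‖w - b‖ ^ 2) / 2))]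
    simp only [Q]
    positivity
  have hτpow : ∀ τ ∈ Set.Ioi (0:ℝ), τ ^ (s - 1) * (π / τ) ^ ((n:ℝ)/2)
      = π ^ ((n:ℝ)/2) * τ ^ (-σ - 1) := by
    intro τ hτ
    have hτ' : (0:ℝ) < τ := hτ
    rw [div_rpow pi_pos.le hτ'.le, show -σ - 1 = (s - 1) - (n:ℝ)/2 by rw [hsn]; ring,
      rpow_sub hτ' (s - 1) ((n:ℝ)/2)]
    ring
  have hPi : ∀ τ ∈ Set.Ioi (0:ℝ), Integrable (P τ) ∧
      ∫ w, P τ w = π ^ ((n:ℝ)/2) * (τ ^ (-σ - 1) * (1 - exp (-((a + B) * τ)))) := by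
    intro τ hτ
    obtain ⟨g1, g2⟩ := aux_gauss hτ (0 : Ex n)
    simp only [add_zero] at g1 g2
    refine ⟨(g1.mul_const _).const_mul _, ?_⟩
    simp only [P]
    rw [integral_const_mul, integral_mul_const, g2, ← mul_assoc, hτpow τ hτ]
    ring
  have hQi : ∀ τ ∈ Set.Ioi (0:ℝ), Integrable (Q τ) ∧
      ∫ w, Q τ w = π ^ ((n:ℝ)/2) * (τ ^ (-σ - 1) * (1 - exp (-((a + B) * τ))) -
        τ ^ (-σ - 1) * (1 - exp (-(a * τ)))) := by
    intro τ hτ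
    obtain ⟨g1, g2⟩ := aux_gauss hτ (0 : Ex n)
    obtain ⟨p1, p2⟩ := aux_gauss hτ b
    obtain ⟨m1, m2⟩ := aux_gauss hτ (-b)
    simp only [add_zero, ← sub_eq_add_neg] at g1 g2 m1 m2
    refine ⟨((((p1.add m1).div_const _).sub (g1.mul_const _)).const_mul _).const_mul _, ?_⟩
    simp only [Q]
    rw [integral_const_mul, integral_const_mul, integral_sub ((p1.fun_add m1).div_const _)
      (g1.mul_const _), integral_div, integral_add p1 m1, integral_mul_const, g2, p2, m2]
    have := hτpow τ hτ
    have e : exp (-((a + B) * τ)) = exp (-(a * τ)) * exp (-(B * τ)) := by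
      rw [← exp_add]; congr 1; ring
    rw [e]
    linear_combination (exp (-(a * τ)) * (1 - exp (-(B * τ)))) * this
  obtain ⟨jB1, jB2⟩ := aux_J h0 h1 (c := a + B) (by positivity)
  obtain ⟨ja1, ja2⟩ := aux_J h0 h1 ha
  have intP : Integrable (Function.uncurry P) ((volume.restrict (Set.Ioi 0)).prod volume) := by
    rw [integrable_prod_iff]
    · constructor
      · filter_upwards [ae_restrict_mem measurableSet_Ioi] with t ht
        exact (hPi t ht).1
      · refine Integrable.congr (jB1.const_mul (π ^ ((n:ℝ)/2))) ?_
        filter_upwards [ae_restrict_mem measurableSet_Ioi] with t ht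
        rw [← (hPi t ht).2]
        exact integral_congr_ae (.of_forall fun w => (Real.norm_of_nonneg (hP0 t ht w)).symm)
    · apply Measurable.aestronglyMeasurable
      unfold Function.uncurry
      fun_prop
  have intQ : Integrable (Function.uncurry Q) ((volume.restrict (Set.Ioi 0)).prod volume) := by
    rw [integrable_prod_iff]
    · constructor
      · filter_upwards [ae_restrict_mem measurableSet_Ioi] with t ht
        exact (hQi t ht).1
      · refine Integrable.congr ((jB1.sub ja1).const_mul (π ^ ((n:ℝ)/2))) ?_
        filter_upwards [ae_restrict_mem measurableSet_Ioi] with t ht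
        simp only [Pi.sub_apply]
        rw [← (hQi t ht).2]
        exact integral_congr_ae (.of_forall fun w => (Real.norm_of_nonneg (hQ0 t ht w)).symm)
    · apply Measurable.aestronglyMeasurable
      unfold Function.uncurry
      fun_prop
  let k : ℝ → Ex n → ℝ := fun τ w => P τ w - Q τ w
  have intk : Integrable (Function.uncurry k) ((volume.restrict (Set.Ioi 0)).prod volume) :=
    intP.sub intQ
  have : Nonempty (Fin n) := ⟨⟨0, by omega⟩⟩
  have hF : ∀ᵐ w : Ex n, ∫ τ in Set.Ioi (0:ℝ), k τ w = Real.Gamma s * auxF s a b w := by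
    have hne : ∀ᵐ w : Ex n, w ≠ 0 := by
      simp [ae_iff]
    filter_upwards [hne] with w hw
    have hw0 : 0 < ‖w‖ := norm_pos_iff.2 hw
    have c0 : 0 < ‖w‖ ^ 2 := by positivity
    have c1 : 0 < ‖w + b‖ ^ 2 + a := by positivity
    have c2 : 0 < ‖w - b‖ ^ 2 + a := by positivity
    have hk : ∀ τ : ℝ, k τ w = τ ^ (s - 1) * exp (-(‖w‖ ^ 2 * τ))
        - (τ ^ (s - 1) * exp (-((‖w + b‖ ^ 2 + a) * τ))
          + τ ^ (s - 1) * exp (-((‖w - b‖ ^ 2 + a) * τ))) / 2 := by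
      intro τ
      simp only [k, P, Q]
      have e1 : exp (-((a + B) * τ)) = exp (-(a * τ)) * exp (-(B * τ)) := by
        rw [← exp_add]; congr 1; ring
      have e2 : ∀ x, exp (-((x + a) * τ)) = exp (-(τ * x)) * exp (-(a * τ)) := by
        intro x; rw [← exp_add]; congr 1; ring
      rw [e1, e2, e2, mul_comm (‖w‖ ^ 2) τ]
      ring
    simp_rw [hk]
    have i1 := aux_gamma_integrable hs c1
    have i2 := aux_gamma_integrable hs c2
    have i0 := aux_gamma_integrable hs c0
    rw [integral_sub i0 ((Integrable.fun_add i1 i2).div_const 2), integral_div, integral_add i1 i2,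
      aux_gamma hs c0, aux_gamma hs c1, aux_gamma hs c2, auxF]
    ring
  have hF' : ∀ᵐ w : Ex n, (Real.Gamma s)⁻¹ * ∫ τ in Set.Ioi (0:ℝ), k τ w = auxF s a b w := by
    filter_upwards [hF] with w hw
    rw [hw, inv_mul_cancel_left₀ hΓ.ne']
  constructor
  · exact (intk.integral_prod_right.const_mul (Real.Gamma s)⁻¹).congr hF'
  · rw [← integral_congr_ae hF', integral_const_mul, ← integral_integral_swap intk]
    have : ∀ τ ∈ Set.Ioi (0:ℝ), ∫ w, k τ w
        = π ^ ((n:ℝ)/2) * (τ ^ (-σ - 1) * (1 - exp (-(a * τ)))) := by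
      intro τ hτ
      simp only [k]
      rw [integral_sub (hPi τ hτ).1 (hQi τ hτ).1, (hPi τ hτ).2, (hQi τ hτ).2]
      ring
    rw [setIntegral_congr_fun measurableSet_Ioi this, integral_const_mul, ja2]
    ring

lemma aux_inv {n : ℕ} (hn : 2 ≤ n) (g : Ex n → ℝ)
    (hG : Integrable (fun w : Ex n => ((‖w‖⁻¹) ^ 2) ^ n * g ((‖w‖⁻¹) ^ 2 • w))) :
    Integrable g ∧ ∫ h, g h = ∫ w : Ex n, ((‖w‖⁻¹) ^ 2) ^ n * g ((‖w‖⁻¹) ^ 2 • w) := by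
  have : Nonempty (Fin n) := ⟨⟨0, by omega⟩⟩
  let f : Ex n → Ex n := EuclideanGeometry.inversion 0 1
  let f' : Ex n → (Ex n →L[ℝ] Ex n) := fun x =>
    ((1 / dist x 0) ^ 2 • ((Submodule.span ℝ {x - 0})ᗮ.reflection : Ex n →L[ℝ] Ex n))
  have hf' : ∀ x ∈ ({0}ᶜ : Set (Ex n)), HasFDerivWithinAt f (f' x) {0}ᶜ x := fun x hx =>
    (EuclideanGeometry.hasFDerivAt_inversion hx).hasFDerivWithinAt
  have hinj : Set.InjOn f {0}ᶜ := (EuclideanGeometry.inversion_injective _ one_ne_zero).injOn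
  have him : f '' {0}ᶜ = {0}ᶜ := by
    rw [Set.image_compl_eq (EuclideanGeometry.inversion_bijective _ one_ne_zero)]
    simp [f]
  have hdet : ∀ x, |(f' x).det| = ((‖x‖⁻¹) ^ 2) ^ n := by
    intro x
    simp only [f', ContinuousLinearMap.det, ContinuousLinearMap.toLinearMap_smul,
      LinearMap.det_smul, abs_mul, finrank_euclideanSpace, Fintype.card_fin]
    have hr := Submodule.det_reflection (𝕜 := ℝ) (K := (Submodule.span ℝ {x - 0})ᗮ)
    have hr' : |LinearMap.det (((Submodule.span ℝ {x - 0})ᗮ.reflection : Ex n →L[ℝ] Ex n) : Ex n →ₗ[ℝ] Ex n)| = 1 := by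
      refine (congrArg abs hr).trans ?_
      simp
    rw [hr', mul_one, abs_of_nonneg (by positivity), dist_zero_right, one_div]
  have hfx : ∀ x, f x = (‖x‖⁻¹) ^ 2 • x := by
    intro x
    simp [f, EuclideanGeometry.inversion]
  have h1 := integrableOn_image_iff_integrableOn_abs_det_fderiv_smul volume
    (measurableSet_singleton (0 : Ex n)).compl hf' hinj g
  have h2 := integral_image_eq_integral_abs_det_fderiv_smul volume
    (measurableSet_singleton (0 : Ex n)).compl hf' hinj g
  rw [him] at h1 h2
  simp only [IntegrableOn, restrict_compl_singleton, hdet, hfx, smul_eq_mul] at h1 h2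
  exact ⟨h1.2 hG, h2⟩

lemma aux_sym {n : ℕ} {p M : ℝ} (hp : (n:ℝ) < p) (u : Ex n → ℝ) (hu : Measurable u)
    (hM : ∀ y, |u y| ≤ M) (x : Ex n)
    (hS : Integrable fun h : Ex n => (u x - (u (x + h) + u (x - h)) / 2) / ‖h‖ ^ p) :
    Tendsto (fun ε => ∫ y in {y : Ex n | ε < dist x y}, (u x - u y) / dist x y ^ p)
      (nhdsWithin (0:ℝ) (Set.Ioi 0))
      (nhds (∫ h : Ex n, (u x - (u (x + h) + u (x - h)) / 2) / ‖h‖ ^ p)) := by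
  have hp0 : 0 < p := lt_of_le_of_lt (Nat.cast_nonneg n) hp
  set S : Ex n → ℝ := fun h => (u x - (u (x + h) + u (x - h)) / 2) / ‖h‖ ^ p with hSdef
  have hmeas : ∀ ε : ℝ, MeasurableSet {h : Ex n | ε < ‖h‖} := fun ε =>
    measurableSet_lt measurable_const measurable_norm
  have key : ∀ ε ∈ Set.Ioi (0:ℝ), ∫ y in {y : Ex n | ε < dist x y}, (u x - u y) / dist x y ^ p
      = ∫ h, Set.indicator {h : Ex n | ε < ‖h‖} S h := by
    intro ε hε
    have hε' : (0:ℝ) < ε := hε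
    let T : Ex n → ℝ := Set.indicator {h : Ex n | ε < ‖h‖} fun h => (u x - u (x + h)) / ‖h‖ ^ p
    have hT : Integrable T := by
      have hb : Integrable (fun h : Ex n => (2 * M * (1 + 1 / ε) ^ p) * (1 + ‖h‖) ^ (-p)) :=
        (integrable_one_add_norm (by simpa using hp)).const_mul _
      refine hb.mono' ?_ (.of_forall fun h => ?_)
      · apply Measurable.aestronglyMeasurable
        exact Measurable.indicator (by fun_prop) (hmeas ε)
      · have hM0 : 0 ≤ M := (abs_nonneg _).trans (hM x)
        by_cases hh : ε < ‖h‖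
        · have hh0 : 0 < ‖h‖ := hε'.trans hh
          simp only [T, Set.indicator, Set.mem_ofPred_eq, hh, if_true]
          rw [norm_div, Real.norm_of_nonneg (by positivity : 0 ≤ ‖h‖ ^ p), rpow_neg (by positivity),
            Real.norm_eq_abs]
          have n1 : |u x - u (x + h)| ≤ 2 * M := by
            have := abs_sub (u x) (u (x + h)); linarith [hM x, hM (x + h)]
          have n2 : (1 + ‖h‖) ^ p ≤ (1 + 1 / ε) ^ p * ‖h‖ ^ p := by
            rw [← mul_rpow (by positivity) (by positivity)]
            apply rpow_le_rpow (by positivity) _ hp0.le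
            have : 1 ≤ 1 / ε * ‖h‖ := by
              rw [one_div, inv_mul_eq_div, le_div_iff₀ hε']; linarith
            linarith
          rw [← div_eq_mul_inv, div_le_div_iff₀ (by positivity) (by positivity)]
          calc _ ≤ 2 * M * ((1 + 1 / ε) ^ p * ‖h‖ ^ p) := by gcongr
            _ = _ := by ring
        · simp only [T, Set.indicator, Set.mem_ofPred_eq, hh, if_false, norm_zero]
          positivity
    have e1 : ∫ y in {y : Ex n | ε < dist x y}, (u x - u y) / dist x y ^ p = ∫ h, T h := by
      rw [← integral_indicator (measurableSet_lt measurable_const (by fun_prop)),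
        ← integral_add_left_eq_self _ x]
      refine integral_congr_ae (.of_forall fun h => ?_)
      simp [T, Set.indicator, dist_eq_norm]
    have e2 : ∫ h, T (-h) = ∫ h, T h := integral_neg_eq_self T volume
    have e3 : ∫ h, (T h + T (-h)) / 2 = ∫ h, T h := by
      rw [integral_div, integral_add hT hT.comp_neg, e2]; ring
    rw [e1, ← e3]
    refine integral_congr_ae (.of_forall fun h => ?_)
    by_cases hh : ε < ‖h‖
    · simp [T, S, Set.indicator, hh, ← sub_eq_add_neg]; ring
    · simp [T, S, Set.indicator, hh]
  have hev : (fun ε => ∫ h, Set.indicator {h : Ex n | ε < ‖h‖} S h) =ᶠ[nhdsWithin (0:ℝ) (Set.Ioi 0)]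
      (fun ε => ∫ y in {y : Ex n | ε < dist x y}, (u x - u y) / dist x y ^ p) := by
    filter_upwards [self_mem_nhdsWithin] with ε hε
    exact (key ε hε).symm
  refine Tendsto.congr' hev ?_
  refine tendsto_integral_filter_of_dominated_convergence (fun h => ‖S h‖) ?_ ?_ hS.norm ?_
  · exact .of_forall fun ε => hS.aestronglyMeasurable.indicator (hmeas ε)
  · exact .of_forall fun ε => .of_forall fun h => norm_indicator_le_norm_self _ _
  · refine .of_forall fun h => ?_
    by_cases hh : h = 0
    · have : S h = 0 := by simp [S, hh, hp0.ne', zero_rpow]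
      have h2 : ∀ ε, Set.indicator {h : Ex n | ε < ‖h‖} S h = S h := by
        intro ε; simp only [Set.indicator]; split_ifs <;> simp [this]
      simp only [h2]
      exact tendsto_const_nhds
    · have h0 : 0 < ‖h‖ := norm_pos_iff.2 hh
      refine tendsto_const_nhds.congr' ?_
      filter_upwards [nhdsWithin_le_nhds (Iio_mem_nhds h0)] with ε hε
      have : ε < ‖h‖ := hε
      exact (Set.indicator_of_mem (s := {h : Ex n | ε < ‖h‖}) this S).symm

lemma aux_pt {n : ℕ} {σ s lam C A : ℝ} (hs : 0 < s) (hsn : 2 * s = (n:ℝ) - 2 * σ)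
    (hlam : 0 < lam) (q w : Ex n) (hA : A = lam ^ 2 + ‖q‖ ^ 2) (hw : w ≠ 0) :
    ((‖w‖⁻¹) ^ 2) ^ n * ((C * (lam / A) ^ s
      - (C * (lam / (lam ^ 2 + ‖q + (‖w‖⁻¹) ^ 2 • w‖ ^ 2)) ^ s
        + C * (lam / (lam ^ 2 + ‖q - (‖w‖⁻¹) ^ 2 • w‖ ^ 2)) ^ s) / 2)
        / ‖(‖w‖⁻¹) ^ 2 • w‖ ^ ((n:ℝ) + 2 * σ))
      = C * (lam / A) ^ s * auxF s ((lam / A) ^ 2) (A⁻¹ • q) w := by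
  have hA0 : 0 < A := by rw [hA]; positivity
  have hm : 0 < ‖w‖ := norm_pos_iff.2 hw
  set m := ‖w‖ with hmdef
  have hnh : ‖(m⁻¹) ^ 2 • w‖ = m⁻¹ := by
    rw [norm_smul, ← hmdef, Real.norm_of_nonneg (by positivity)]
    field_simp
  have hplus : ∀ v : Ex n, ‖v‖ = m → lam / (lam ^ 2 + ‖q + (m⁻¹) ^ 2 • v‖ ^ 2)
      = (lam / A) * m ^ 2 * (‖v + A⁻¹ • q‖ ^ 2 + (lam / A) ^ 2)⁻¹ := by
    intro v hv
    have e : lam ^ 2 + ‖q + (m⁻¹) ^ 2 • v‖ ^ 2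
        = A * (m⁻¹) ^ 2 * (‖v + A⁻¹ • q‖ ^ 2 + (lam / A) ^ 2) := by
      rw [norm_add_sq_real, norm_add_sq_real, inner_smul_right, inner_smul_right, norm_smul,
        norm_smul, real_inner_comm, hv, Real.norm_of_nonneg (by positivity),
        Real.norm_of_nonneg (by positivity)]
      have hq : ‖q‖ ^ 2 = A - lam ^ 2 := by rw [hA]; ring
      rw [mul_pow A⁻¹, hq]
      field_simp
      ring
    have hpos : 0 < ‖v + A⁻¹ • q‖ ^ 2 + (lam / A) ^ 2 := by positivity
    rw [e]
    field_simp
  have hpow : ∀ y : ℝ, 0 < y → ((lam / A) * m ^ 2 * y⁻¹) ^ s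
      = (lam / A) ^ s * (m ^ 2) ^ s * y ^ (-s) := by
    intro y hy
    rw [mul_rpow (by positivity) (by positivity), mul_rpow (by positivity) (by positivity),
      inv_rpow hy.le, rpow_neg hy.le]
  have h1 := hplus w rfl
  have h2 := hplus (-w) (by rw [norm_neg])
  have e2 : ‖-w + A⁻¹ • q‖ = ‖w - A⁻¹ • q‖ := by rw [← norm_neg]; congr 1; abel
  rw [smul_neg, ← sub_eq_add_neg, e2] at h2
  rw [h1, h2, hpow _ (by positivity), hpow _ (by positivity), hnh, auxF, ← hmdef]
  have hpre : ((m⁻¹) ^ 2) ^ n / (m⁻¹) ^ ((n:ℝ) + 2 * σ) = (m ^ 2) ^ (-s) := by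
    rw [← rpow_natCast, ← rpow_natCast, ← rpow_natCast, ← rpow_mul (by positivity),
      ← rpow_sub (by positivity), inv_rpow hm.le, ← rpow_neg hm.le, ← rpow_mul hm.le]
    congr 1
    push_cast
    linarith
  have hcancel : (m ^ 2) ^ (-s) * (m ^ 2) ^ s = 1 := by
    rw [← rpow_add (by positivity)]; simp
  rw [mul_div_left_comm, hpre]
  linear_combination (-C * (lam / A) ^ s * ((‖w + A⁻¹ • q‖ ^ 2 + (lam / A) ^ 2) ^ (-s)
    + (‖w - A⁻¹ • q‖ ^ 2 + (lam / A) ^ 2) ^ (-s)) / 2) * hcancel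

/-- The standard bubble is a positive solution of `(-Δ)^σ u = u^{(n+2σ)/(n-2σ)}` on `ℝⁿ`. -/
theorem bubble_solves_fractional_equation (n : ℕ) (σ : ℝ)
    (hn : 2 ≤ n) (hσ0 : 0 < σ) (hσ1 : σ < 1) (z : Ex n) (lam : ℝ) (hlam : 0 < lam) :
    (∀ x : Ex n, 0 < bubble n σ z lam x) ∧
    (∀ x : Ex n, fracLap n σ (bubble n σ z lam) x
      = bubble n σ z lam x ^ (((n:ℝ) + 2*σ) / ((n:ℝ) - 2*σ))) := by
  
  have hn2 : (2:ℝ) ≤ n := by exact_mod_cast hn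
  have hG1 : 0 < Real.Gamma (((n:ℝ) + 2*σ)/2) := Real.Gamma_pos_of_pos (by linarith)
  have hG2 : 0 < Real.Gamma (((n:ℝ) - 2*σ)/2) := Real.Gamma_pos_of_pos (by linarith)
  have hG3 : 0 < Real.Gamma (1 - σ) := Real.Gamma_pos_of_pos (by linarith)
  have hpos : ∀ x : Ex n, 0 < bubble n σ z lam x := by
    intro x
    unfold bubble
    positivity
  refine ⟨hpos, fun x => ?_⟩
  obtain ⟨s, hsdef⟩ : ∃ s, s = ((n:ℝ) - 2*σ)/2 := ⟨_, rfl⟩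
  have hs : 0 < s := by rw [hsdef]; linarith
  obtain ⟨G, hG⟩ : ∃ G, G = Real.Gamma (((n:ℝ) + 2*σ)/2) / Real.Gamma s := ⟨_, rfl⟩
  have hG0 : 0 < G := by rw [hG, hsdef]; positivity
  obtain ⟨C, hC⟩ : ∃ C, C = (2:ℝ) ^ s * G ^ (s / (2 * σ)) := ⟨_, rfl⟩
  have hC0 : 0 < C := by rw [hC]; positivity
  have hbub : ∀ y, bubble n σ z lam y = C * (lam / (lam ^ 2 + ‖y - z‖ ^ 2)) ^ s := by
    intro y
    rw [bubble, ← hsdef, ← hG, hC, show ((n:ℝ) - 2*σ)/(4*σ) = s / (2 * σ) by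
      rw [hsdef]; field_simp; ring]
  obtain ⟨q, hq⟩ : ∃ q, q = x - z := ⟨_, rfl⟩
  obtain ⟨A, hA⟩ : ∃ A, A = lam ^ 2 + ‖q‖ ^ 2 := ⟨_, rfl⟩
  have hA0 : 0 < A := by rw [hA]; positivity
  obtain ⟨hF1, hF2⟩ := auxF_main (s := s) (a := (lam / A) ^ 2) hσ0 hσ1 (by positivity) hs
    (by rw [hsdef]; ring) hn (A⁻¹ • q)
  set u := bubble n σ z lam with hu
  let S : Ex n → ℝ := fun h => (u x - (u (x + h) + u (x - h)) / 2) / ‖h‖ ^ ((n:ℝ) + 2 * σ)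
  have : Nonempty (Fin n) := ⟨⟨0, by omega⟩⟩
  have hae : (fun w => C * (lam / A) ^ s * auxF s ((lam / A) ^ 2) (A⁻¹ • q) w) =ᵐ[volume]
      (fun w : Ex n => ((‖w‖⁻¹) ^ 2) ^ n * S ((‖w‖⁻¹) ^ 2 • w)) := by
    have hne : ∀ᵐ w : Ex n, w ≠ 0 := by
      simp [ae_iff]
    filter_upwards [hne] with w hw
    rw [← aux_pt (σ := σ) (C := C) hs (by rw [hsdef]; ring) hlam q w hA hw]
    simp only [S, hbub]
    rw [← hq, ← hA, add_sub_right_comm, sub_right_comm, ← hq]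
  obtain ⟨hS1, hS2⟩ := aux_inv hn S ((hF1.const_mul _).congr hae)
  rw [← integral_congr_ae hae, integral_const_mul, hF2] at hS2
  have hub : ∀ y, |u y| ≤ C * (lam / lam ^ 2) ^ s := by
    intro y
    rw [abs_of_pos (hpos y), hbub]
    gcongr
    nlinarith [sq_nonneg ‖y - z‖]
  have hum : Measurable u := by
    rw [funext hbub]
    fun_prop
  have hlim := (aux_sym (p := (n:ℝ) + 2 * σ) (by linarith) u hum hub x hS1).limUnder_eq
  rw [fracLap, hlim]
  change _ * ∫ h, S h = _
  rw [hS2, hbub, ← hq, ← hA]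
  have ht : 0 < lam / A := by positivity
  have hr : ((n:ℝ) + 2*σ) / ((n:ℝ) - 2*σ) = 1 + 2 * σ / s := by
    have : (n:ℝ) - 2 * σ ≠ 0 := by linarith
    rw [hsdef]; field_simp; ring
  rw [hr, rpow_add (by positivity), rpow_one, mul_rpow hC0.le (by positivity),
    ← rpow_mul ht.le, mul_div_cancel₀ _ hs.ne']
  have hCp : C ^ (2 * σ / s) = 2 ^ (2 * σ) * G := by
    rw [hC, mul_rpow (by positivity) (by positivity), ← rpow_mul (by norm_num),
      ← rpow_mul hG0.le, mul_div_cancel₀ _ hs.ne',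
      show s / (2 * σ) * (2 * σ / s) = 1 by field_simp, rpow_one]
  have hap : ((lam / A) ^ 2) ^ σ = (lam / A) ^ (2 * σ) := by
    rw [← rpow_natCast, ← rpow_mul ht.le]; norm_num
  have hπ : 0 < π ^ ((n:ℝ)/2) := by positivity
  have hGs : 0 < Real.Gamma s := Real.Gamma_pos_of_pos hs
  rw [hCp, hap, hG]
  field_simp
end
end

section
/- Trace inequality on exterior domains uniformly in the centers: let z₁, z₂ ∈ ℝⁿ with |z₁ − z₂| ≥ 10 and Ω = ℝ^{n+1}_+ \ (B₁⁺(z₁) ∪ B₁⁺(z₂)). There exists C = C(n,σ), independent of z₁, z₂, such that for all U ∈ D_Ω, (∫_{∂'Ω} |U(x,0)|^{2n/(n−2σ)} dx)^{(n−2σ)/(2n)} ≤ C (∫_Ω t^{1−2σ}|∇U|² dX)^{1/2}. -/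
open MeasureTheory Real Filter

noncomputable section

/-- The exterior domain `Ω = ℝ^{n+1}_+ \ (B₁⁺(z₁) ∪ B₁⁺(z₂))`. -/
def extOmega (n : ℕ) (z₁ z₂ : Ex n) : Set (Fx n) :=
  {p | 0 < p.2 ∧ 1 ≤ pnorm (p.1 - z₁, p.2) ∧ 1 ≤ pnorm (p.1 - z₂, p.2)}

/-- The flat boundary portion `∂'Ω ⊂ ℝⁿ`. -/
def extFlat (n : ℕ) (z₁ z₂ : Ex n) : Set (Ex n) :=
  {x | 1 < ‖x - z₁‖ ∧ 1 < ‖x - z₂‖}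

open scoped ENNReal

def EE (n : ℕ) (σ : ℝ) (F : Fx n → ℝ≥0∞) : ℝ≥0∞ :=
  ∫⁻ t in Set.Ioi (0:ℝ), ∫⁻ y : Ex n, ENNReal.ofReal (t ^ (1 - 2*σ)) * F (y, t)

def S2 (n : ℕ) (σ : ℝ) (F : Fx n → ℝ≥0∞) (x : Ex n) : ℝ≥0∞ :=
  ∫⁻ z in (Metric.ball (0 : Ex n) 1) ×ˢ Set.Ioi (0:ℝ),
    ENNReal.ofReal (z.2 ^ (1 - 2*σ)) * F (x + z.2 • z.1, z.2)

lemma lint_S2 (n : ℕ) (σ : ℝ) (F : Fx n → ℝ≥0∞) (hF : Measurable F) :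
    ∫⁻ x, S2 n σ F x = volume (Metric.ball (0 : Ex n) 1) * EE n σ F := by
  unfold S2 EE
  rw [lintegral_lintegral_swap (by fun_prop)]
  have h1 : ∀ z : Fx n, (∫⁻ x : Ex n, ENNReal.ofReal (z.2 ^ (1 - 2*σ)) * F (x + z.2 • z.1, z.2))
      = ∫⁻ y : Ex n, ENNReal.ofReal (z.2 ^ (1 - 2*σ)) * F (y, z.2) := by
    intro z
    exact lintegral_add_right_eq_self (μ := (volume : Measure (Ex n)))
      (fun y => ENNReal.ofReal (z.2 ^ (1 - 2*σ)) * F (y, z.2)) (z.2 • z.1)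
  simp_rw [h1]
  have hm : Measurable (fun t : ℝ => ∫⁻ y : Ex n, ENNReal.ofReal (t ^ (1 - 2*σ)) * F (y, t)) := by
    apply Measurable.lintegral_prod_left'
      (f := fun q : Ex n × ℝ => ENNReal.ofReal (q.2 ^ (1 - 2*σ)) * F (q.1, q.2))
    fun_prop
  rw [Measure.volume_eq_prod, setLIntegral_prod_symm _ (by fun_prop)]
  simp only [lintegral_const, Measure.restrict_apply MeasurableSet.univ, Set.univ_inter]
  rw [lintegral_mul_const _ hm, mul_comm]

lemma cs_lem (n : ℕ) (G : Fx n → ℝ≥0∞) (hG : Measurable G) (T : Set ℝ) (hT : MeasurableSet T)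
    (hT0 : T ⊆ Set.Ioi 0) (a : ℝ) :
    ∫⁻ z in (Metric.ball (0 : Ex n) 1) ×ˢ T, G z ^ (1/2 : ℝ) ≤
      (∫⁻ z in (Metric.ball (0 : Ex n) 1) ×ˢ T, ENNReal.ofReal (z.2 ^ a) * G z) ^ (1/2 : ℝ) *
      (volume (Metric.ball (0 : Ex n) 1) * ∫⁻ t in T, ENNReal.ofReal (t ^ (-a))) ^ (1/2 : ℝ) := by
  have hms : MeasurableSet ((Metric.ball (0 : Ex n) 1) ×ˢ T) := measurableSet_ball.prod hT
  have h := ENNReal.lintegral_mul_le_Lp_mul_Lq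
    (volume.restrict ((Metric.ball (0 : Ex n) 1) ×ˢ T)) Real.HolderConjugate.two_two
    (f := fun z => (ENNReal.ofReal (z.2 ^ a) * G z) ^ (1/2 : ℝ))
    (g := fun z => (ENNReal.ofReal (z.2 ^ (-a))) ^ (1/2 : ℝ)) (by fun_prop) (by fun_prop)
  simp only [← ENNReal.rpow_mul] at h
  norm_num only [ENNReal.rpow_one] at h
  have e1 : ∫⁻ z in (Metric.ball (0 : Ex n) 1) ×ˢ T, ENNReal.ofReal (z.2 ^ (-a))
      = volume (Metric.ball (0 : Ex n) 1) * ∫⁻ t in T, ENNReal.ofReal (t ^ (-a)) := by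
    rw [Measure.volume_eq_prod, setLIntegral_prod_symm _ (by fun_prop)]
    simp only [lintegral_const, Measure.restrict_apply MeasurableSet.univ, Set.univ_inter]
    rw [lintegral_mul_const _ (by fun_prop), mul_comm]
  rw [e1] at h
  refine le_trans (le_of_eq ?_) h
  refine setLIntegral_congr_fun hms ?_
  intro z hz
  have hz2 : 0 < z.2 := hT0 hz.2
  simp only [Pi.mul_apply]
  rw [← ENNReal.mul_rpow_of_nonneg _ _ (by norm_num)]
  congr 1
  rw [mul_right_comm, ← ENNReal.ofReal_mul (by positivity), ← Real.rpow_add hz2]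
  simp

lemma near_lem (n : ℕ) (σ : ℝ) (hσ : 0 < σ) (F : Fx n → ℝ≥0∞) (hF : Measurable F) (x : Ex n)
    (R : ℝ) (hR : 0 < R) :
    ∫⁻ z in (Metric.ball (0 : Ex n) 1) ×ˢ Set.Ioc 0 R, F (x + z.2 • z.1, z.2) ^ (1/2 : ℝ) ≤
      (S2 n σ F x) ^ (1/2 : ℝ) *
      (volume (Metric.ball (0 : Ex n) 1) * ENNReal.ofReal (R ^ (2*σ) / (2*σ))) ^ (1/2 : ℝ) := by
  refine (cs_lem n (fun z => F (x + z.2 • z.1, z.2)) (by fun_prop) (Set.Ioc 0 R)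
    measurableSet_Ioc Set.Ioc_subset_Ioi_self (1 - 2*σ)).trans ?_
  have e : ∫⁻ t in Set.Ioc 0 R, ENNReal.ofReal (t ^ (-(1 - 2*σ)))
      = ENNReal.ofReal (R ^ (2*σ) / (2*σ)) := by
    rw [← ofReal_integral_eq_lintegral_ofReal]
    · rw [← intervalIntegral.integral_of_le hR.le, integral_rpow (Or.inl (by linarith))]
      have : -(1 - 2*σ) + 1 = 2 * σ := by ring
      rw [this, Real.zero_rpow (by positivity), sub_zero]
    · exact (intervalIntegrable_iff_integrableOn_Ioc_of_le hR.le).1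
        (intervalIntegral.intervalIntegrable_rpow' (by linarith))
    · filter_upwards [ae_restrict_mem measurableSet_Ioc] with t ht
      exact Real.rpow_nonneg ht.1.le _
  rw [e]
  gcongr
  unfold S2
  apply lintegral_mono_set
  gcongr
  exact Set.Ioc_subset_Ioi_self

lemma far_lem (n : ℕ) (σ : ℝ) (hσ : 2 * σ < n) (F : Fx n → ℝ≥0∞) (hF : Measurable F) (x : Ex n)
    (R : ℝ) (hR : 0 < R) :
    ∫⁻ z in (Metric.ball (0 : Ex n) 1) ×ˢ Set.Ioi R, F (x + z.2 • z.1, z.2) ^ (1/2 : ℝ) ≤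
      (EE n σ F) ^ (1/2 : ℝ) *
      (volume (Metric.ball (0 : Ex n) 1) * ENNReal.ofReal (R ^ (2*σ - n) / (n - 2*σ))) ^ (1/2 : ℝ) := by
  refine (cs_lem n (fun z => F (x + z.2 • z.1, z.2)) (by fun_prop) (Set.Ioi R)
    measurableSet_Ioi (Set.Ioi_subset_Ioi hR.le) (1 - 2*σ + n)).trans ?_
  have e : ∫⁻ t in Set.Ioi R, ENNReal.ofReal (t ^ (-(1 - 2*σ + n)))
      = ENNReal.ofReal (R ^ (2*σ - n) / (n - 2*σ)) := by
    rw [← ofReal_integral_eq_lintegral_ofReal]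
    · rw [integral_Ioi_rpow_of_lt (by linarith) hR]
      have : -(1 - 2*σ + n) + 1 = 2 * σ - n := by ring
      rw [this, neg_div, ← div_neg, neg_sub]
    · exact integrableOn_Ioi_rpow_of_lt (by linarith) hR
    · filter_upwards [ae_restrict_mem measurableSet_Ioi] with t ht
      exact Real.rpow_nonneg (hR.trans ht).le _
  rw [e]
  gcongr
  unfold EE
  rw [Measure.volume_eq_prod, setLIntegral_prod_symm _ (by fun_prop)]
  refine le_trans ?_ (lintegral_mono_set (Set.Ioi_subset_Ioi hR.le))
  refine setLIntegral_mono' measurableSet_Ioi ?_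
  intro t ht
  have ht0 : 0 < t := hR.trans ht
  refine (setLIntegral_le_lintegral _ _).trans (le_of_eq ?_)
  simp only
  have key : ∫⁻ v : Ex n, F (x + t • v, t) =
      ENNReal.ofReal (abs (t ^ n)⁻¹) * ∫⁻ y : Ex n, F (y, t) := by
    have h1 : ∫⁻ v : Ex n, F (x + t • v, t) = ∫⁻ y, F (x + y, t) ∂(Measure.map (t • ·) volume) := by
      rw [lintegral_map (by fun_prop) (by fun_prop)]
    rw [h1, Measure.map_addHaar_smul _ ht0.ne', lintegral_smul_measure]
    simp only [finrank_euclideanSpace, Fintype.card_fin, smul_eq_mul]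
    congr 1
    exact lintegral_add_left_eq_self (fun y => F (y, t)) x
  rw [lintegral_const_mul _ (by fun_prop), lintegral_const_mul _ (by fun_prop), key, ← mul_assoc,
    ← ENNReal.ofReal_mul (by positivity)]
  congr 2
  rw [Real.rpow_add ht0, Real.rpow_natCast, abs_of_pos (by positivity)]
  field_simp

lemma one_le_pnorm_of {n : ℕ} (w v : Ex n) (t : ℝ)
    (h : 1 ≤ ‖w‖^2 + 2 * t * inner ℝ w v + t^2) : 1 ≤ pnorm ((w + t • v, t) : Fx n) := by
  unfold pnorm
  rw [Real.one_le_sqrt]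
  simp only
  rw [norm_add_sq_real, inner_smul_right]
  nlinarith [sq_nonneg ‖t • v‖]

lemma near_center {n : ℕ} (w v : Ex n) (t : ℝ) (ht : 0 < t) (hw : 1 < ‖w‖)
    (hv : v ∈ Metric.ball ((1 / (4 * ‖w‖)) • w) (1/4)) : 1 ≤ pnorm ((w + t • v, t) : Fx n) := by
  apply one_le_pnorm_of
  have h1 : 0 ≤ inner ℝ w v := by
    rw [mem_ball_iff_norm] at hv
    have h2 : v = (1 / (4 * ‖w‖)) • w + (v - (1 / (4 * ‖w‖)) • w) := by abel
    have h3 := abs_real_inner_le_norm w (v - (1 / (4 * ‖w‖)) • w)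
    rw [h2, inner_add_right, inner_smul_right, real_inner_self_eq_norm_sq]
    have h4 : 1 / (4 * ‖w‖) * ‖w‖^2 = ‖w‖ / 4 := by field_simp
    rw [h4]
    have := (abs_le.1 h3).1
    nlinarith
  have : 0 ≤ t * inner ℝ w v := by positivity
  nlinarith [sq_nonneg t]

lemma far_center {n : ℕ} (w v : Ex n) (t : ℝ) (ht : 0 < t) (hw : 2 ≤ ‖w‖)
    (hv : ‖v‖ ≤ 1/2) : 1 ≤ pnorm ((w + t • v, t) : Fx n) := by
  apply one_le_pnorm_of
  have h3 := (abs_le.1 (abs_real_inner_le_norm w v)).1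
  have h4 : ‖w‖ * ‖v‖ ≤ ‖w‖ * (1/2) := by gcongr
  have h5 : t * inner ℝ w v ≥ t * (-(‖w‖ / 2)) := by
    apply mul_le_mul_of_nonneg_left _ ht.le
    linarith
  nlinarith [sq_nonneg (t - ‖w‖ / 2)]

lemma norm_of_mem {n : ℕ} (w v : Ex n) (hw : 1 < ‖w‖)
    (hv : v ∈ Metric.ball ((1 / (4 * ‖w‖)) • w) (1/4)) : ‖v‖ ≤ 1/2 := by
  rw [mem_ball_iff_norm] at hv
  have h1 : ‖(1 / (4 * ‖w‖)) • w‖ = 1/4 := by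
    rw [norm_smul, Real.norm_of_nonneg (by positivity)]
    field_simp
  have := norm_le_norm_add_norm_sub' v ((1 / (4 * ‖w‖)) • w)
  linarith

lemma exists_dir (n : ℕ) (z₁ z₂ x : Ex n) (hz : 10 ≤ dist z₁ z₂) (hx : x ∈ extFlat n z₁ z₂) :
    ∃ e : Ex n, ∀ v ∈ Metric.ball e (1/4), ‖v‖ ≤ 1/2 ∧
      ∀ t : ℝ, 0 < t → ((x + t • v, t) : Fx n) ∈ extOmega n z₁ z₂ := by
  have hr : ∀ (z v : Ex n) (t : ℝ), x + t • v - z = (x - z) + t • v := by intros; abel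
  by_cases h : 2 ≤ ‖x - z₂‖
  · refine ⟨(1 / (4 * ‖x - z₁‖)) • (x - z₁), fun v hv => ?_⟩
    have hv2 := norm_of_mem _ v hx.1 hv
    refine ⟨hv2, fun t ht => ⟨ht, ?_, ?_⟩⟩
    · simp only [hr]; exact near_center _ _ _ ht hx.1 hv
    · simp only [hr]; exact far_center _ _ _ ht h hv2
  · have h1 : 2 ≤ ‖x - z₁‖ := by
      rw [dist_eq_norm] at hz
      have : ‖z₁ - z₂‖ ≤ ‖x - z₁‖ + ‖x - z₂‖ := by
        have := norm_sub_le (x - z₂) (x - z₁)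
        rw [sub_sub_sub_cancel_left] at this
        linarith
      linarith
    refine ⟨(1 / (4 * ‖x - z₂‖)) • (x - z₂), fun v hv => ?_⟩
    have hv2 := norm_of_mem _ v hx.2 hv
    refine ⟨hv2, fun t ht => ⟨ht, ?_, ?_⟩⟩
    · simp only [hr]; exact far_center _ _ _ ht h1 hv2
    · simp only [hr]; exact near_center _ _ _ ht hx.2 hv

lemma fderiv_le (n : ℕ) (U : Fx n → ℝ) (p : Fx n) (v : Ex n) (hv : ‖v‖ ≤ 1/2) :
    |fderiv ℝ U p (v, 1)| ≤ 2 * Real.sqrt (gradSq U p) := by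
  set L := fderiv ℝ U p with hL
  have h1 : L (v, 1) = (∑ i, v i * L (EuclideanSpace.single i 1, 0)) + L (0, 1) := by
    have : ((v, 1) : Fx n) = (∑ i, v i • ((EuclideanSpace.single i 1, 0) : Fx n)) + (0, 1) := by
      ext i
      · simp [Prod.fst_sum, Finset.sum_apply, Pi.single_apply]
      · simp [Prod.snd_sum]
    rw [this, map_add, map_sum]
    simp only [map_smul, smul_eq_mul]
  have hcs : (∑ i, v i * L (EuclideanSpace.single i 1, 0))^2 ≤
      (∑ i, v i ^ 2) * (∑ i, L (EuclideanSpace.single i 1, 0) ^ 2) :=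
    Finset.sum_mul_sq_le_sq_mul_sq _ _ _
  have hv2 : ∑ i, v i ^ 2 ≤ 1 := by
    have := EuclideanSpace.real_norm_sq_eq v
    rw [← this]; nlinarith [norm_nonneg v]
  have hg : gradSq U p = (∑ i, L (EuclideanSpace.single i 1, 0) ^ 2) + L (0, 1) ^ 2 := rfl
  have hA : 0 ≤ (∑ i, L (EuclideanSpace.single i 1, 0) ^ 2) := by positivity
  have h0 : 0 ≤ gradSq U p := by rw [hg]; positivity
  apply abs_le_of_sq_le_sq _ (by positivity)
  rw [mul_pow, Real.sq_sqrt h0, h1, hg]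
  nlinarith [sq_nonneg ((∑ i, v i * L (EuclideanSpace.single i 1, 0)) - L (0, 1))]

lemma path_le (n : ℕ) (U : Fx n → ℝ) (hU : ContDiff ℝ (⊤ : ℕ∞) U) (hc : HasCompactSupport U)
    (x v : Ex n) (hv : ‖v‖ ≤ 1/2) :
    ENNReal.ofReal |U (x, 0)| ≤
      ∫⁻ t in Set.Ioi (0:ℝ), 2 * ENNReal.ofReal (gradSq U (x + t • v, t)) ^ (1/2 : ℝ) := by
  have hU1 : ContDiff ℝ 1 U := hU.of_le (by exact_mod_cast le_top)
  have hφ : ContDiff ℝ 1 (fun s : ℝ => U (x + (-s) • v, -s)) := by fun_prop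
  have hcs : HasCompactSupport (fun s : ℝ => U (x + (-s) • v, -s)) := by
    refine HasCompactSupport.intro (K := (fun p : Fx n => -p.2) '' tsupport U)
      (hc.isCompact.image (by fun_prop)) ?_
    intro s hs
    by_contra hne
    exact hs ⟨(x + (-s) • v, -s), subset_tsupport _ hne, by simp⟩
  have h := HasCompactSupport.enorm_le_lintegral_Ici_deriv hφ hcs 0
  simp only [neg_zero, zero_smul, add_zero] at h
  rw [← Real.norm_eq_abs, ofReal_norm]
  refine h.trans ?_
  have hd : ∀ s : ℝ, ‖deriv (fun s : ℝ => U (x + (-s) • v, -s)) s‖ₑ ≤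
      2 * ENNReal.ofReal (gradSq U (x + (-s) • v, -s)) ^ (1/2 : ℝ) := by
    intro s
    have hp : HasDerivAt (fun s : ℝ => ((x + (-s) • v, -s) : Fx n)) (-v, -1) s := by
      apply HasDerivAt.prodMk
      · have := ((hasDerivAt_neg s).smul_const v).const_add x
        simpa using this
      · exact hasDerivAt_neg s
    have hUd : HasFDerivAt U (fderiv ℝ U (x + (-s) • v, -s)) (x + (-s) • v, -s) :=
      (hU1.differentiable (by norm_num) _).hasFDerivAt
    have := hUd.comp_hasDerivAt s hp
    have e : deriv (fun s : ℝ => U (x + (-s) • v, -s)) s =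
      - fderiv ℝ U (x + (-s) • v, -s) (v, 1) := by
      rw [← map_neg]
      exact this.deriv
    rw [e, enorm_neg, ← ofReal_norm, Real.norm_eq_abs]
    have h0 : 0 ≤ gradSq U (x + (-s) • v, -s) := by unfold gradSq; positivity
    rw [ENNReal.ofReal_rpow_of_nonneg h0 (by norm_num), ← Real.sqrt_eq_rpow]
    refine (ENNReal.ofReal_le_ofReal (fderiv_le n U _ v hv)).trans (le_of_eq ?_)
    rw [ENNReal.ofReal_mul (by norm_num), ENNReal.ofReal_ofNat]
  refine (lintegral_mono hd).trans (le_of_eq ?_)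
  have hmp : MeasurePreserving (fun t : ℝ => -t) volume volume := Measure.measurePreserving_neg _
  have := hmp.setLIntegral_comp_preimage_emb (MeasurableEquiv.neg ℝ).measurableEmbedding
    (fun t => 2 * ENNReal.ofReal (gradSq U (x + t • v, t)) ^ (1/2 : ℝ)) (Set.Ici 0)
  rw [setLIntegral_congr Ioi_ae_eq_Ici, ← this]
  simp

lemma gradSq_cont (n : ℕ) (U : Fx n → ℝ) (hU : ContDiff ℝ (⊤ : ℕ∞) U) : Continuous (gradSq U) := by
  have h : Continuous (fderiv ℝ U) := hU.continuous_fderiv (by simp)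
  unfold gradSq
  fun_prop

lemma gradSq_nonneg {n : ℕ} (U : Fx n → ℝ) (p : Fx n) : 0 ≤ gradSq U p := by
  unfold gradSq; positivity

lemma pnorm_cont (n : ℕ) : Continuous (pnorm : Fx n → ℝ) := by
  unfold pnorm; fun_prop

lemma meas_Omega (n : ℕ) (z₁ z₂ : Ex n) : MeasurableSet (extOmega n z₁ z₂) := by
  have h := pnorm_cont n
  refine MeasurableSet.inter ?_ (MeasurableSet.inter ?_ ?_)
  · exact measurableSet_lt measurable_const measurable_snd
  · exact (isClosed_le continuous_const
      (h.comp (by fun_prop : Continuous fun p : Fx n => (p.1 - z₁, p.2)))).measurableSet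
  · exact (isClosed_le continuous_const
      (h.comp (by fun_prop : Continuous fun p : Fx n => (p.1 - z₂, p.2)))).measurableSet

def FF (n : ℕ) (z₁ z₂ : Ex n) (U : Fx n → ℝ) : Fx n → ℝ≥0∞ :=
  Set.indicator (extOmega n z₁ z₂) (fun p => ENNReal.ofReal (gradSq U p))

lemma FF_meas (n : ℕ) (z₁ z₂ : Ex n) (U : Fx n → ℝ) (hU : ContDiff ℝ (⊤ : ℕ∞) U) :
    Measurable (FF n z₁ z₂ U) :=
  ((gradSq_cont n U hU).measurable.ennreal_ofReal).indicator (meas_Omega n z₁ z₂)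

lemma avg_le (n : ℕ) (z₁ z₂ : Ex n) (hz : 10 ≤ dist z₁ z₂) (U : Fx n → ℝ)
    (hU : ContDiff ℝ (⊤ : ℕ∞) U) (hc : HasCompactSupport U) (x : Ex n)
    (hx : x ∈ extFlat n z₁ z₂) :
    volume (Metric.ball (0 : Ex n) (1/4)) * ENNReal.ofReal |U (x, 0)| ≤
     2 * ∫⁻ z in (Metric.ball (0 : Ex n) 1) ×ˢ Set.Ioi 0,
        FF n z₁ z₂ U (x + z.2 • z.1, z.2) ^ (1/2 : ℝ) := by
  obtain ⟨e, he⟩ := exists_dir n z₁ z₂ x hz hx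
  have hm := FF_meas n z₁ z₂ U hU
  have hsub : Metric.ball e (1/4) ⊆ Metric.ball (0 : Ex n) 1 := by
    intro v hv
    rw [mem_ball_zero_iff]
    linarith [(he v hv).1]
  calc volume (Metric.ball (0 : Ex n) (1/4)) * ENNReal.ofReal |U (x, 0)|
      = ∫⁻ v in Metric.ball e (1/4), ENNReal.ofReal |U (x, 0)| := by
        rw [lintegral_const, Measure.restrict_apply MeasurableSet.univ, Set.univ_inter,
          Measure.addHaar_ball_center volume e, mul_comm]
    _ ≤ ∫⁻ v in Metric.ball e (1/4), ∫⁻ t in Set.Ioi (0:ℝ),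
          2 * FF n z₁ z₂ U (x + t • v, t) ^ (1/2 : ℝ) := by
        refine setLIntegral_mono' measurableSet_ball ?_
        intro v hv
        refine (path_le n U hU hc x v (he v hv).1).trans (le_of_eq ?_)
        refine setLIntegral_congr_fun measurableSet_Ioi ?_
        intro t ht
        simp only [FF]
        rw [Set.indicator_of_mem ((he v hv).2 t ht)]
    _ ≤ ∫⁻ v in Metric.ball (0 : Ex n) 1, ∫⁻ t in Set.Ioi (0:ℝ),
          2 * FF n z₁ z₂ U (x + t • v, t) ^ (1/2 : ℝ) := lintegral_mono_set hsub
    _ = _ := by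
        rw [← lintegral_const_mul _ (by fun_prop), Measure.volume_eq_prod,
          setLIntegral_prod _ (by fun_prop)]

lemma avg_le2 (n : ℕ) (σ : ℝ) (hσ : 0 < σ) (hσn : 2 * σ < n)
    (z₁ z₂ : Ex n) (hz : 10 ≤ dist z₁ z₂) (U : Fx n → ℝ)
    (hU : ContDiff ℝ (⊤ : ℕ∞) U) (hc : HasCompactSupport U) (x : Ex n)
    (hx : x ∈ extFlat n z₁ z₂) (R : ℝ) (hR : 0 < R) :
    volume (Metric.ball (0 : Ex n) (1/4)) * ENNReal.ofReal |U (x, 0)| ≤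
     2 * ((S2 n σ (FF n z₁ z₂ U) x) ^ (1/2 : ℝ) *
      (volume (Metric.ball (0 : Ex n) 1) * ENNReal.ofReal (R ^ (2*σ) / (2*σ))) ^ (1/2 : ℝ) +
      (EE n σ (FF n z₁ z₂ U)) ^ (1/2 : ℝ) *
      (volume (Metric.ball (0 : Ex n) 1) * ENNReal.ofReal (R ^ (2*σ - n) / (n - 2*σ))) ^ (1/2 : ℝ)) := by
  have hm := FF_meas n z₁ z₂ U hU
  refine (avg_le n z₁ z₂ hz U hU hc x hx).trans ?_
  gcongr
  refine le_trans ?_ (add_le_add (near_lem n σ hσ _ hm x R hR) (far_lem n σ hσn _ hm x R hR))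
  rw [← Set.Ioc_union_Ioi_eq_Ioi hR.le, Set.prod_union]
  exact lintegral_union_le _ _ _

lemma EE_eq (n : ℕ) (σ : ℝ) (hσ1 : σ < 1) (z₁ z₂ : Ex n) (U : Fx n → ℝ)
    (hU : ContDiff ℝ (⊤ : ℕ∞) U) (hc : HasCompactSupport U) :
    EE n σ (FF n z₁ z₂ U) =
      ENNReal.ofReal (∫ p in extOmega n z₁ z₂, p.2 ^ (1 - 2*σ) * gradSq U p) := by
  have hm := FF_meas n z₁ z₂ U hU
  have hgc := gradSq_cont n U hU
  have hO := meas_Omega n z₁ z₂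
  rw [ofReal_integral_eq_lintegral_ofReal]
  · rw [← lintegral_indicator hO]
    unfold EE
    have h1 : ∀ p : Fx n, Set.indicator (extOmega n z₁ z₂)
        (fun p => ENNReal.ofReal (p.2 ^ (1 - 2*σ) * gradSq U p)) p =
        Set.indicator (Set.univ ×ˢ Set.Ioi 0)
        (fun p => ENNReal.ofReal (p.2 ^ (1 - 2*σ)) * FF n z₁ z₂ U p) p := by
      intro p
      by_cases hp : p ∈ extOmega n z₁ z₂
      · have hp2 : 0 < p.2 := hp.1
        rw [Set.indicator_of_mem hp, Set.indicator_of_mem (by simpa using hp2), FF,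
          Set.indicator_of_mem hp, ENNReal.ofReal_mul (by positivity)]
      · have : FF n z₁ z₂ U p = 0 := Set.indicator_of_notMem hp _
        rw [Set.indicator_of_notMem hp]
        simp [Set.indicator_apply, this]
    simp_rw [h1]
    rw [lintegral_indicator (MeasurableSet.univ.prod measurableSet_Ioi), Measure.volume_eq_prod,
      setLIntegral_prod_symm _ (by fun_prop)]
    simp
  · obtain ⟨M, hM⟩ : ∃ M, ∀ p ∈ tsupport U, gradSq U p ≤ M := by
      obtain ⟨M, hM⟩ := hc.isCompact.bddAbove_image (f := gradSq U) hgc.continuousOn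
      exact ⟨M, fun p hp => hM ⟨p, hp, rfl⟩⟩
    have hz : ∀ p ∉ tsupport U, gradSq U p = 0 := by
      intro p hp
      have : fderiv ℝ U p = 0 := by
        by_contra h
        exact hp (support_fderiv_subset ℝ h)
      simp [gradSq, this]
    obtain ⟨r, hr⟩ : ∃ r, ∀ p ∈ tsupport U, ‖p‖ ≤ r := hc.isCompact.isBounded.exists_norm_le
    have hint : IntegrableOn (fun p : Fx n => p.2 ^ (1 - 2*σ) * |M|)
        ((Metric.closedBall 0 r) ×ˢ (Set.Ioc 0 |r|)) := by
      unfold IntegrableOn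
      rw [Measure.volume_eq_prod, ← Measure.prod_restrict]
      have h1 : IntegrableOn (fun t : ℝ => t ^ (1 - 2*σ)) (Set.Ioc 0 |r|) :=
        (intervalIntegrable_iff_integrableOn_Ioc_of_le (abs_nonneg r)).1
          (intervalIntegral.intervalIntegrable_rpow' (by linarith))
      have h2 : IntegrableOn (fun _ : Ex n => |M|) (Metric.closedBall 0 r) := by
        refine integrableOn_const ?_
        exact measure_closedBall_lt_top.ne
      have := Integrable.mul_prod h2 h1
      refine this.congr (ae_of_all _ fun p => ?_)
      simp [mul_comm]
    have hmeas : MeasurableSet ((Metric.closedBall (0 : Ex n) r) ×ˢ (Set.Ioc 0 |r|)) :=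
      measurableSet_closedBall.prod measurableSet_Ioc
    have hint2 := hint.integrable_indicator hmeas
    refine (hint2.mono' (g := _) (f := Set.indicator (extOmega n z₁ z₂)
      (fun p => p.2 ^ (1 - 2*σ) * gradSq U p)) ?_ ?_) |> (integrable_indicator_iff hO).1
    · exact ((show Measurable fun p : Fx n => p.2 ^ (1 - 2*σ) * gradSq U p by fun_prop).indicator
        hO).aestronglyMeasurable
    · refine ae_of_all _ fun p => ?_
      by_cases hp : p ∈ extOmega n z₁ z₂
      · have hp2 : 0 < p.2 := hp.1
        rw [Set.indicator_of_mem hp]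
        by_cases hs : p ∈ tsupport U
        · have hn := hr p hs
          rw [Prod.norm_def, max_le_iff] at hn
          rw [Set.indicator_of_mem]
          · rw [Real.norm_of_nonneg (by have := gradSq_nonneg U p; positivity)]
            gcongr
            exact (hM p hs).trans (le_abs_self M)
          · refine ⟨by simpa using hn.1, hp2, ?_⟩
            exact (le_abs_self p.2).trans (hn.2.trans (le_abs_self r))
        · rw [hz p hs]
          simp only [mul_zero, norm_zero]
          apply Set.indicator_nonneg
          intro q hq
          have : 0 < q.2 := hq.2.1
          positivity
      · rw [Set.indicator_of_notMem hp, norm_zero]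
        apply Set.indicator_nonneg
        intro q hq
        have : 0 < q.2 := hq.2.1
        positivity
  · filter_upwards [ae_restrict_mem hO] with p hp
    have hp2 : 0 < p.2 := hp.1
    have := gradSq_nonneg U p
    simp only [Pi.zero_apply]
    positivity

lemma alg_pos (n : ℕ) (σ : ℝ) (hn : 2 ≤ n) (hσ : 0 < σ) (hσn : 2 * σ < n) (A a s e : ℝ)
    (ha : 0 ≤ a) (hA : 0 < A)
    (hs : 0 < s) (he : 0 < e) (h : ∀ R : ℝ, 0 < R → a ≤ A * (s * R ^ σ + e * R ^ (σ - n/2))) :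
    a ^ qc n σ ≤ (2 * A) ^ qc n σ * (s ^ (2:ℝ) * e ^ (qc n σ - 2)) := by
  have hn0 : (0:ℝ) < n := by positivity
  have hd : (0:ℝ) < n - 2*σ := by linarith
  have hq : 0 < qc n σ := by unfold qc; positivity
  have h1 := h ((e / s) ^ (2 / (n:ℝ))) (by positivity)
  rw [← Real.rpow_mul (by positivity), ← Real.rpow_mul (by positivity)] at h1
  have e1 : s * (e / s) ^ (2 / (n:ℝ) * σ) = s ^ (1 - 2*σ/n) * e ^ (2*σ/n) := by
    rw [Real.div_rpow he.le hs.le, Real.rpow_sub hs, Real.rpow_one,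
      show 2 / (n:ℝ) * σ = 2*σ/n by ring]
    ring
  have e2 : e * (e / s) ^ (2 / (n:ℝ) * (σ - n/2)) = s ^ (1 - 2*σ/n) * e ^ (2*σ/n) := by
    rw [show 2 / (n:ℝ) * (σ - n/2) = 2*σ/n - 1 by field_simp, Real.rpow_sub (by positivity),
      Real.rpow_one, Real.div_rpow he.le hs.le, Real.rpow_sub hs, Real.rpow_one]
    field_simp
  rw [e1, e2] at h1
  calc a ^ qc n σ ≤ (2 * A * (s ^ (1 - 2*σ/n) * e ^ (2*σ/n))) ^ qc n σ := by
        apply Real.rpow_le_rpow ha _ hq.le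
        linarith
    _ = _ := by
        rw [Real.mul_rpow (by positivity : 0 ≤ 2 * A) (by positivity),
          Real.mul_rpow (by positivity : 0 ≤ s ^ (1 - 2*σ/n)) (by positivity), ← Real.rpow_mul hs.le,
          ← Real.rpow_mul he.le]
        congr 3
        · unfold qc; field_simp
        · unfold qc; field_simp; ring

lemma alg_nonneg (n : ℕ) (σ : ℝ) (hn : 2 ≤ n) (hσ : 0 < σ) (hσn : 2 * σ < n) (A a s e : ℝ)
    (ha : 0 ≤ a) (hA : 0 < A)
    (hs : 0 ≤ s) (he : 0 ≤ e) (h : ∀ R : ℝ, 0 < R → a ≤ A * (s * R ^ σ + e * R ^ (σ - n/2))) :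
    a ^ qc n σ ≤ (2 * A) ^ qc n σ * (s ^ (2:ℝ) * e ^ (qc n σ - 2)) := by
  have hd : (0:ℝ) < n - 2*σ := by linarith
  have hq : 0 ≤ qc n σ - 2 := by
    unfold qc
    rw [sub_nonneg, le_div_iff₀ hd]; linarith
  have hcont : Continuous (fun ε : ℝ =>
      (2 * A) ^ qc n σ * ((s + ε) ^ (2:ℝ) * (e + ε) ^ (qc n σ - 2))) := by
    have h1 : Continuous (fun ε : ℝ => (s + ε) ^ (2:ℝ)) :=
      (continuous_const.add continuous_id).rpow_const (fun _ => Or.inr (by norm_num))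
    have h2 : Continuous (fun ε : ℝ => (e + ε) ^ (qc n σ - 2)) :=
      (continuous_const.add continuous_id).rpow_const (fun _ => Or.inr hq)
    fun_prop
  have ht := (hcont.tendsto 0).mono_left (nhdsWithin_le_nhds (s := Set.Ioi 0))
  simp only [add_zero] at ht
  refine ge_of_tendsto ht ?_
  filter_upwards [self_mem_nhdsWithin] with ε hε
  have hε0 : 0 < ε := hε
  refine alg_pos n σ hn hσ hσn A a (s + ε) (e + ε) ha hA (by positivity) (by positivity) ?_
  intro R hR
  refine (h R hR).trans ?_
  gcongr <;> linarith

lemma pw_real (n : ℕ) (σ : ℝ) (hn : 2 ≤ n) (hσ : 0 < σ) (hσn : 2 * σ < n) :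
    ∃ A : ℝ, 0 < A ∧ ∀ (a s e : ℝ), 0 ≤ a → 0 ≤ s → 0 ≤ e →
    (∀ R : ℝ, 0 < R → volume (Metric.ball (0 : Ex n) (1/4)) * ENNReal.ofReal a ≤
     2 * (ENNReal.ofReal s ^ (1/2 : ℝ) *
      (volume (Metric.ball (0 : Ex n) 1) * ENNReal.ofReal (R ^ (2*σ) / (2*σ))) ^ (1/2 : ℝ) +
      ENNReal.ofReal e ^ (1/2 : ℝ) *
      (volume (Metric.ball (0 : Ex n) 1) * ENNReal.ofReal (R ^ (2*σ - n) / (n - 2*σ))) ^ (1/2 : ℝ))) →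
    ∀ R : ℝ, 0 < R → a ≤ A * (Real.sqrt s * R ^ σ + Real.sqrt e * R ^ (σ - n/2)) := by
  have hd : (0:ℝ) < n - 2*σ := by linarith
  have fin : ∀ r : ℝ, volume (Metric.ball (0 : Ex n) r) =
      ENNReal.ofReal (volume (Metric.ball (0 : Ex n) r)).toReal := fun r =>
    (ENNReal.ofReal_toReal measure_ball_lt_top.ne).symm
  have pos : ∀ r : ℝ, 0 < r → 0 < (volume (Metric.ball (0 : Ex n) r)).toReal := fun r hr =>
    ENNReal.toReal_pos (Metric.measure_ball_pos _ _ hr).ne' measure_ball_lt_top.ne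
  have hκ := pos (1/4) (by norm_num)
  have hV := pos 1 (by norm_num)
  rw [fin (1/4), fin 1]
  generalize (volume (Metric.ball (0 : Ex n) (1/4))).toReal = κ at *
  generalize (volume (Metric.ball (0 : Ex n) 1)).toReal = V at *
  refine ⟨2 * (Real.sqrt (V / (2*σ)) + Real.sqrt (V / (n - 2*σ))) / κ, by positivity, ?_⟩
  intro a s e ha hs he h R hR
  have h1 := h R hR
  have hh : (0:ℝ) ≤ 1/2 := by norm_num
  rw [← ENNReal.ofReal_mul hκ.le, ← ENNReal.ofReal_mul hV.le, ← ENNReal.ofReal_mul hV.le,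
    ENNReal.ofReal_rpow_of_nonneg hs hh, ENNReal.ofReal_rpow_of_nonneg he hh,
    ENNReal.ofReal_rpow_of_nonneg (by positivity) hh,
    ENNReal.ofReal_rpow_of_nonneg (by positivity) hh,
    ← ENNReal.ofReal_mul (by positivity), ← ENNReal.ofReal_mul (by positivity),
    ← ENNReal.ofReal_add (by positivity) (by positivity), ← ENNReal.ofReal_ofNat 2,
    ← ENNReal.ofReal_mul (by norm_num), ENNReal.ofReal_le_ofReal_iff (by positivity)] at h1
  simp only [← Real.sqrt_eq_rpow] at h1
  have e1 : Real.sqrt (V * (R ^ (2*σ) / (2*σ))) = Real.sqrt (V / (2*σ)) * R ^ σ := by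
    rw [show V * (R ^ (2*σ) / (2*σ)) = V / (2*σ) * R ^ (2*σ) by ring, Real.sqrt_mul (by positivity),
      Real.sqrt_eq_rpow (R ^ (2*σ)), ← Real.rpow_mul hR.le]
    congr 2; ring
  have e2 : Real.sqrt (V * (R ^ (2*σ-n) / (n-2*σ))) = Real.sqrt (V / (n-2*σ)) * R ^ (σ-n/2) := by
    rw [show V * (R ^ (2*σ-n) / (n-2*σ)) = V / (n-2*σ) * R ^ (2*σ-n) by ring,
      Real.sqrt_mul (by positivity),
      Real.sqrt_eq_rpow (R ^ (2*σ-n)), ← Real.rpow_mul hR.le]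
    congr 2; ring
  rw [e1, e2] at h1
  rw [div_mul_eq_mul_div, le_div_iff₀ hκ, mul_comm a]
  refine h1.trans ?_
  have p1 : 0 ≤ Real.sqrt s * R ^ σ * Real.sqrt (V / (n-2*σ)) := by positivity
  have p2 : 0 ≤ Real.sqrt e * R ^ (σ-n/2) * Real.sqrt (V / (2*σ)) := by positivity
  nlinarith

/-- Sobolev trace inequality on the exterior domain, with a constant depending only on `n, σ`
and in particular uniform in the centers `z₁, z₂` as long as `|z₁ - z₂| ≥ 10`. -/
theorem exterior_trace_inequality (n : ℕ) (σ : ℝ)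
    (hn : 2 ≤ n) (hσ0 : 0 < σ) (hσ1 : σ < 1) :
    ∃ C : ℝ, 0 < C ∧
      ∀ z₁ z₂ : Ex n, 10 ≤ dist z₁ z₂ →
        ∀ U : Fx n → ℝ, ContDiff ℝ (⊤ : ℕ∞) U → HasCompactSupport U →
          (∫ x in extFlat n z₁ z₂, |U (x, 0)| ^ qc n σ) ^ (qc n σ)⁻¹
            ≤ C * Real.sqrt (∫ p in extOmega n z₁ z₂, p.2 ^ (1 - 2*σ) * gradSq U p) := by
  have hn2 : (2:ℝ) ≤ n := by exact_mod_cast hn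
  have hσn : 2 * σ < n := by linarith
  have hd : (0:ℝ) < n - 2*σ := by linarith
  have hq0 : 0 < qc n σ := by unfold qc; positivity
  have hq2 : 0 ≤ qc n σ - 2 := by
    unfold qc
    rw [sub_nonneg, le_div_iff₀ hd]; linarith
  obtain ⟨A, hA, hpw⟩ := pw_real n σ hn hσ0 hσn
  have hV : 0 < (volume (Metric.ball (0 : Ex n) 1)).toReal :=
    ENNReal.toReal_pos (Metric.measure_ball_pos _ _ one_pos).ne' measure_ball_lt_top.ne
  have hVe : volume (Metric.ball (0 : Ex n) 1) =
      ENNReal.ofReal (volume (Metric.ball (0 : Ex n) 1)).toReal :=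
    (ENNReal.ofReal_toReal measure_ball_lt_top.ne).symm
  set V := (volume (Metric.ball (0 : Ex n) 1)).toReal with hVdef
  refine ⟨((2 * A) ^ qc n σ * V) ^ (qc n σ)⁻¹, by positivity, ?_⟩
  intro z₁ z₂ hz U hU hc
  have hEE := EE_eq n σ hσ1 z₁ z₂ U hU hc
  have hE0 : 0 ≤ ∫ p in extOmega n z₁ z₂, p.2 ^ (1 - 2*σ) * gradSq U p := by
    refine setIntegral_nonneg (meas_Omega n z₁ z₂) fun p hp => ?_
    have hp2 : 0 < p.2 := hp.1
    have := gradSq_nonneg U p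
    positivity
  generalize (∫ p in extOmega n z₁ z₂, p.2 ^ (1 - 2*σ) * gradSq U p) = E at *
  have hm := FF_meas n z₁ z₂ U hU
  have hS := lint_S2 n σ _ hm
  rw [hEE, hVe, ← ENNReal.ofReal_mul hV.le] at hS
  have hSm : Measurable (S2 n σ (FF n z₁ z₂ U)) := by
    unfold S2
    refine Measurable.lintegral_prod_right' (f := fun q : Ex n × Fx n =>
      ENNReal.ofReal (q.2.2 ^ (1 - 2*σ)) * FF n z₁ z₂ U (q.1 + q.2.2 • q.2.1, q.2.2)) ?_
    fun_prop
  have hfin : ∀ᵐ x, S2 n σ (FF n z₁ z₂ U) x < ∞ :=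
    ae_lt_top hSm (by rw [hS]; exact ENNReal.ofReal_ne_top)
  have hflat : MeasurableSet (extFlat n z₁ z₂) := by
    refine MeasurableSet.inter ?_ ?_
    · exact measurableSet_lt measurable_const
        (by fun_prop : Measurable fun x : Ex n => ‖x - z₁‖)
    · exact measurableSet_lt measurable_const
        (by fun_prop : Measurable fun x : Ex n => ‖x - z₂‖)
  set K := (2 * A) ^ qc n σ with hK
  have hKp : 0 < K := by positivity
  have hpoint : ∀ᵐ x ∂(volume.restrict (extFlat n z₁ z₂)),
      ENNReal.ofReal (|U (x, 0)| ^ qc n σ) ≤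
      ENNReal.ofReal (K * Real.sqrt E ^ (qc n σ - 2)) * S2 n σ (FF n z₁ z₂ U) x := by
    filter_upwards [ae_restrict_mem hflat, ae_restrict_of_ae hfin] with x hx hxf
    have hb := avg_le2 n σ hσ0 hσn z₁ z₂ hz U hU hc x hx
    rw [hEE] at hb
    have hse : S2 n σ (FF n z₁ z₂ U) x = ENNReal.ofReal (S2 n σ (FF n z₁ z₂ U) x).toReal :=
      (ENNReal.ofReal_toReal hxf.ne).symm
    have hs0 : 0 ≤ (S2 n σ (FF n z₁ z₂ U) x).toReal := ENNReal.toReal_nonneg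
    rw [hse] at hb ⊢
    generalize (S2 n σ (FF n z₁ z₂ U) x).toReal = s at *
    have h1 := hpw |U (x, 0)| s E (abs_nonneg _) hs0 hE0 hb
    have h2 := alg_nonneg n σ hn hσ0 hσn A _ _ _ (abs_nonneg _) hA (Real.sqrt_nonneg s)
      (Real.sqrt_nonneg E) h1
    rw [← ENNReal.ofReal_mul (by positivity)]
    apply ENNReal.ofReal_le_ofReal
    refine h2.trans (le_of_eq ?_)
    rw [Real.rpow_two, Real.sq_sqrt hs0]
    ring
  have hUc : Continuous (fun x : Ex n => |U (x, 0)| ^ qc n σ) := by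
    have := hU.continuous
    exact Continuous.rpow_const (by fun_prop) (fun _ => Or.inr hq0.le)
  have hint : ∫ x in extFlat n z₁ z₂, |U (x, 0)| ^ qc n σ ≤ K * V * Real.sqrt E ^ qc n σ := by
    rw [integral_eq_lintegral_of_nonneg_ae (ae_of_all _ fun x => by simp only [Pi.zero_apply]; positivity)
      hUc.aestronglyMeasurable]
    apply ENNReal.toReal_le_of_le_ofReal (by positivity)
    refine (lintegral_mono_ae hpoint).trans ?_
    refine (setLIntegral_le_lintegral _ _).trans ?_
    rw [lintegral_const_mul _ hSm, hS, ← ENNReal.ofReal_mul (by positivity)]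
    apply ENNReal.ofReal_le_ofReal
    have e1 : Real.sqrt E ^ qc n σ = Real.sqrt E ^ (qc n σ - 2) * E := by
      have := Real.rpow_add_of_nonneg (Real.sqrt_nonneg E) hq2 (by norm_num : (0:ℝ) ≤ 2)
      rw [sub_add_cancel, Real.rpow_two, Real.sq_sqrt hE0] at this
      exact this
    rw [e1]
    apply le_of_eq
    ring
  calc _ ≤ (K * V * Real.sqrt E ^ qc n σ) ^ (qc n σ)⁻¹ := by
        apply Real.rpow_le_rpow _ hint (by positivity)
        exact setIntegral_nonneg hflat fun x _ => by positivity
    _ = _ := by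
        rw [Real.mul_rpow (by positivity) (by positivity), ← Real.rpow_mul (Real.sqrt_nonneg E),
          mul_inv_cancel₀ hq0.ne', Real.rpow_one]
end
end
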